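/- arXiv:2201.01124 — 2 statements merged into one kernel-verified Lean document; each statement's English description precedes it below -/
import Mathlib

section
/- Σ_{k=1}^∞ λ(2k)/((2k+1)·2^{2k}) = -(log 2)/4 + G/π, where λ(s) = Σ_{m=0}^∞ 1/(2m+1)^s and G is Catalan's constant. -/
open Real

noncomputable def dirichletLambda (s : ℕ) : ℝ := ∑' m : ℕ, 1 / (2 * (m : ℝ) + 1) ^ s

theorem intervalIntegrable_pow_mul_log (n : ℕ) (a b : ℝ) :
    IntervalIntegrable (fun x : ℝ => x ^ n * log x) MeasureTheory.volume a b :=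
  intervalIntegral.intervalIntegrable_log'.continuousOn_mul (by fun_prop)

theorem integral_pow_mul_log (n : ℕ) :
    ∫ x in (0 : ℝ)..1, x ^ n * log x = -(1 / ((n : ℝ) + 1) ^ 2) := by
  have hn : (n : ℝ) + 1 ≠ 0 := by positivity
  rw [intervalIntegral.integral_eq_sub_of_hasDerivAt_of_le zero_le_one
    (f := fun x => x ^ n * (x * log x) / (n + 1) - x ^ (n + 1) / ((n : ℝ) + 1) ^ 2)]
  · simp
  · exact (((continuous_id.pow n).mul continuous_mul_log).div_const _ |>.sub
      (by fun_prop)).continuousOn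
  · intro x hx
    have hx0 : x ≠ 0 := hx.1.ne'
    have h := (((hasDerivAt_pow (n + 1) x).mul (hasDerivAt_log hx0)).div_const
      ((n : ℝ) + 1)).sub ((hasDerivAt_pow (n + 1) x).div_const (((n : ℝ) + 1) ^ 2))
    convert h using 1
    · ext y
      simp [pow_succ, mul_assoc]
    · simp only [Nat.add_sub_cancel, Nat.cast_add, Nat.cast_one]
      field_simp
      ring
  · exact intervalIntegrable_pow_mul_log n 0 1

theorem summable_one_div_two_mul_add_one_sq :
    Summable fun n : ℕ => 1 / (2 * (n : ℝ) + 1) ^ 2 := by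
  have h := (Real.summable_one_div_nat_pow.mpr one_lt_two).comp_injective
    (i := fun n : ℕ => 2 * n + 1) (fun a b h => by simpa using h)
  exact h.congr fun n => by simp

theorem integral_log_div_one_add_sq :
    ∫ x in Set.Ioo (0 : ℝ) 1, (1 + x ^ 2)⁻¹ * log x
      = -∑' n : ℕ, (-1 : ℝ) ^ n / (2 * (n : ℝ) + 1) ^ 2 := by
  have hmoment (n : ℕ) : ∫ x in Set.Ioo (0 : ℝ) 1, x ^ (2 * n) * log x
      = -(1 / (2 * (n : ℝ) + 1) ^ 2) := by
    rw [← MeasureTheory.integral_Ioc_eq_integral_Ioo,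
      ← intervalIntegral.integral_of_le zero_le_one, integral_pow_mul_log]
    push_cast
    rfl
  have h := MeasureTheory.hasSum_integral_of_summable_integral_norm
    (μ := MeasureTheory.volume.restrict (Set.Ioo (0 : ℝ) 1))
    (F := fun (n : ℕ) x => (-1 : ℝ) ^ n * (x ^ (2 * n) * log x)) ?_ ?_
  · have hterm (n : ℕ) : ∫ x in Set.Ioo (0 : ℝ) 1, (-1 : ℝ) ^ n * (x ^ (2 * n) * log x)
        = -((-1 : ℝ) ^ n / (2 * (n : ℝ) + 1) ^ 2) := by
      rw [MeasureTheory.integral_const_mul, hmoment]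
      ring
    rw [← tsum_neg, ← funext hterm, h.tsum_eq]
    refine MeasureTheory.setIntegral_congr_fun measurableSet_Ioo fun x hx => ?_
    have hx2 : |-x ^ 2| < 1 := by
      rw [abs_neg, abs_of_nonneg (sq_nonneg x)]
      nlinarith [hx.1, hx.2]
    have hg := (hasSum_geometric_of_abs_lt_one hx2).mul_right (log x)
    rw [sub_neg_eq_add] at hg
    rw [← hg.tsum_eq]
    refine tsum_congr fun n => ?_
    rw [neg_pow, pow_mul]
    ring
  · intro n
    exact (((intervalIntegrable_iff_integrableOn_Ioo_of_le zero_le_one).mp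
      (intervalIntegrable_pow_mul_log (2 * n) 0 1)).const_mul _)
  · refine summable_one_div_two_mul_add_one_sq.congr fun n => ?_
    rw [← neg_neg (1 / (2 * (n : ℝ) + 1) ^ 2), ← hmoment, ← MeasureTheory.integral_neg]
    refine MeasureTheory.setIntegral_congr_fun measurableSet_Ioo fun x hx => ?_
    have hl : log x ≤ 0 := log_nonpos hx.1.le hx.2.le
    simp [abs_of_nonpos hl, abs_of_nonneg hx.1.le]

theorem integral_log_tan_zero_pi_div_four :
    ∫ x in (0 : ℝ)..(π / 4), log (tan x)
      = -∑' n : ℕ, (-1 : ℝ) ^ n / (2 * (n : ℝ) + 1) ^ 2 := by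
  have himage : arctan '' Set.Ioo 0 1 = Set.Ioo 0 (π / 4) := by
    ext y
    constructor
    · rintro ⟨x, hx, rfl⟩
      rw [← arctan_zero, ← arctan_one]
      exact ⟨arctan_strictMono hx.1, arctan_strictMono hx.2⟩
    · intro hy
      have h1 : -(π / 2) < y := by linarith [hy.1, pi_pos]
      have h2 : y < π / 2 := by linarith [hy.2, pi_pos]
      refine ⟨tan y, ⟨tan_pos_of_pos_of_lt_pi_div_two hy.1 h2, ?_⟩, arctan_tan h1 h2⟩
      rw [← tan_pi_div_four]
      exact tan_lt_tan_of_lt_of_lt_pi_div_two h1 (by linarith [pi_pos]) hy.2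
  rw [← integral_log_div_one_add_sq, intervalIntegral.integral_of_le (by positivity),
    MeasureTheory.integral_Ioc_eq_integral_Ioo, ← himage,
    MeasureTheory.integral_image_eq_integral_abs_deriv_smul measurableSet_Ioo
      (fun x _ => (hasDerivAt_arctan' x).hasDerivWithinAt) arctan_injective.injOn]
  refine MeasureTheory.setIntegral_congr_fun measurableSet_Ioo fun x _ => ?_
  have : 0 ≤ (1 + x ^ 2)⁻¹ := by positivity
  simp only [abs_of_nonneg this, smul_eq_mul, tan_arctan]

theorem integral_log_cos_zero_pi_div_four :
    ∫ x in (0 : ℝ)..(π / 4), log (cos x)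
      = (∑' n : ℕ, (-1 : ℝ) ^ n / (2 * (n : ℝ) + 1) ^ 2) / 2 - π / 4 * log 2 := by
  have hs : IntervalIntegrable (fun x => log (sin x)) MeasureTheory.volume 0 (π / 4) :=
    intervalIntegrable_log_sin
  have hc : IntervalIntegrable (fun x => log (cos x)) MeasureTheory.volume 0 (π / 4) :=
    intervalIntegrable_log_cos
  have hpos (x : ℝ) (hx : x ∈ Set.Ioc 0 (π / 4)) : sin x ≠ 0 ∧ cos x ≠ 0 :=
    ⟨(sin_pos_of_pos_of_lt_pi hx.1 (by linarith [hx.2, pi_pos])).ne',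
      (cos_pos_of_mem_Ioo ⟨by linarith [hx.1, pi_pos], by linarith [hx.2, pi_pos]⟩).ne'⟩
  have hsub : (∫ x in (0 : ℝ)..(π / 4), log (sin x)) - ∫ x in (0 : ℝ)..(π / 4), log (cos x)
      = -∑' n : ℕ, (-1 : ℝ) ^ n / (2 * (n : ℝ) + 1) ^ 2 := by
    rw [← integral_log_tan_zero_pi_div_four, ← intervalIntegral.integral_sub hs hc]
    refine intervalIntegral.integral_congr_uIoo fun x hx => ?_
    rw [Set.uIoo_of_le (by positivity)] at hx
    obtain ⟨h1, h2⟩ := hpos x (Set.Ioo_subset_Ioc_self hx)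
    simp only [tan_eq_sin_div_cos, log_div h1 h2]
  have hadd : (∫ x in (0 : ℝ)..(π / 4), log (sin x)) + ∫ x in (0 : ℝ)..(π / 4), log (cos x)
      = -(π / 2 * log 2) := by
    have h2 : ∫ x in (0 : ℝ)..(π / 4), log (sin (2 * x)) = -(π / 4 * log 2) := by
      rw [intervalIntegral.integral_comp_mul_left (fun x => log (sin x)) two_ne_zero,
        show 2 * (π / 4) = π / 2 by ring, mul_zero, integral_log_sin_zero_pi_div_two, smul_eq_mul]
      ring
    have h2i : IntervalIntegrable (fun x => log (sin (2 * x))) MeasureTheory.volume 0 (π / 4) := by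
      have h := (intervalIntegrable_log_sin (a := 0) (b := π / 2)).comp_mul_left (c := 2)
      rw [zero_div, show π / 2 / 2 = π / 4 by ring] at h
      exact h
    have hconst : ∫ _x in (0 : ℝ)..(π / 4), log 2 = π / 4 * log 2 := by simp
    rw [← intervalIntegral.integral_add hs hc,
      show -(π / 2 * log 2) = -(π / 4 * log 2) - π / 4 * log 2 by ring, ← h2]
    conv_rhs => rw [← hconst]
    rw [← intervalIntegral.integral_sub h2i (by simp)]
    refine intervalIntegral.integral_congr_uIoo fun x hx => ?_
    rw [Set.uIoo_of_le (by positivity)] at hx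
    obtain ⟨h1, h2⟩ := hpos x (Set.Ioo_subset_Ioc_self hx)
    simp only [sin_two_mul, mul_assoc, log_mul two_ne_zero (mul_ne_zero h1 h2), log_mul h1 h2]
    ring
  linarith

theorem hasSum_pi_mul_cot_pi_mul {x : ℝ} (hx0 : 0 < x) (hx1 : x < 1) :
    HasSum (fun n : ℕ => 2 * x / (x ^ 2 - ((n : ℝ) + 1) ^ 2)) (π * cot (π * x) - 1 / x) := by
  have hz : (x : ℂ) ∈ Complex.integerComplement := by
    rintro ⟨n, hn⟩
    have hn' : (n : ℝ) = x := by exact_mod_cast hn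
    rw [← hn'] at hx0 hx1
    have h0 : 0 < n := by exact_mod_cast hx0
    have h1 : n < 1 := by exact_mod_cast hx1
    omega
  have h := (summable_cotTerm hz).hasSum
  rw [← cot_series_rep' hz] at h
  rw [← Complex.hasSum_ofReal]
  convert h using 1
  · ext n
    rw [cotTerm_identity hz]
    push_cast
    rw [← sq_sub_sq]
    ring
  · push_cast
    rfl

theorem hasSum_pi_mul_tan {x : ℝ} (hx0 : 0 < x) (hx1 : x < 1) :
    HasSum (fun m : ℕ => 2 * x / ((2 * (m : ℝ) + 1) ^ 2 - x ^ 2)) (π / 2 * tan (π * x / 2)) := by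
  have hall := hasSum_pi_mul_cot_pi_mul hx0 hx1
  have hhalf := (hasSum_pi_mul_cot_pi_mul (half_pos hx0) (by linarith)).div_const 2
  set f : ℕ → ℝ := fun n => 2 * x / (x ^ 2 - ((n : ℝ) + 1) ^ 2) with hf
  have heven : HasSum (fun m => f (2 * m + 1)) ((π * cot (π * (x / 2)) - 1 / (x / 2)) / 2) := by
    refine hhalf.congr_fun fun m => ?_
    simp only [hf]
    push_cast
    rw [show x ^ 2 - (2 * (m : ℝ) + 1 + 1) ^ 2 = 4 * ((x / 2) ^ 2 - ((m : ℝ) + 1) ^ 2) by ring]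
    generalize (x / 2) ^ 2 - ((m : ℝ) + 1) ^ 2 = d
    by_cases hd : d = 0
    · simp [hd]
    · field_simp
      ring
  have hodd := (hall.summable.comp_injective (i := fun m : ℕ => 2 * m)
    (fun a b h => by simpa using h)).hasSum
  have hval := hall.unique (hodd.even_add_odd heven)
  have hs : sin (π * x / 2) ≠ 0 := (sin_pos_of_pos_of_lt_pi (by positivity)
    (by nlinarith [pi_pos])).ne'
  have hc : cos (π * x / 2) ≠ 0 := (cos_pos_of_mem_Ioo
    ⟨by nlinarith [pi_pos], by nlinarith [pi_pos]⟩).ne'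
  have htotal : π / 2 * tan (π * x / 2) = -∑' m : ℕ, f (2 * m) := by
    have htrig : 2 * cot (π * x) = cot (π * x / 2) - tan (π * x / 2) := by
      rw [show π * x = 2 * (π * x / 2) by ring, cot_eq_cos_div_sin, cot_eq_cos_div_sin,
        tan_eq_sin_div_cos, sin_two_mul, cos_two_mul']
      rw [show 2 * (π * x / 2) / 2 = π * x / 2 by ring]
      field_simp
    rw [← mul_div_assoc π x 2] at hval
    have h2 : 1 / (x / 2) / 2 = 1 / x := by field_simp
    rw [sub_div, h2] at hval
    simp only [Function.comp] at hval
    linear_combination π / 2 * htrig - hval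
  rw [htotal]
  refine hodd.neg.congr_fun fun m => ?_
  simp only [hf, Function.comp]
  push_cast
  rw [← div_neg, neg_sub]

theorem integral_mul_pi_tan :
    ∫ x in (0 : ℝ)..(1 / 2), x * (π / 2 * tan (π * x / 2))
      = log 2 / 4 + 2 / π * ∫ x in (0 : ℝ)..(π / 4), log (cos x) := by
  have hpi := pi_pos
  have hmem (x : ℝ) (hx : x ∈ Set.uIcc (0 : ℝ) (1 / 2)) : cos (π * x / 2) ≠ 0 := by
    rw [Set.uIcc_of_le (by norm_num)] at hx
    refine (cos_pos_of_mem_Ioo ⟨?_, ?_⟩).ne' <;> nlinarith [hx.1, hx.2]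
  have hlin (x : ℝ) : HasDerivAt (fun x : ℝ => π * x / 2) (π / 2) x := by
    simpa using ((hasDerivAt_id x).const_mul π).div_const 2
  rw [intervalIntegral.integral_mul_deriv_eq_deriv_mul (u := fun x => x) (u' := fun _ => 1)
    (v := fun x => -log (cos (π * x / 2)))]
  · have hsub : ∫ x in (0 : ℝ)..(1 / 2), log (cos (π * x / 2))
        = 2 / π * ∫ x in (0 : ℝ)..(π / 4), log (cos x) := by
      have h := intervalIntegral.integral_comp_mul_left (a := 0) (b := 1 / 2)
        (fun x => log (cos x)) (c := π / 2) (by positivity)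
      rw [mul_zero, show π / 2 * (1 / 2) = π / 4 by ring, smul_eq_mul, inv_div] at h
      rw [← h]
      congr! 4
      ring
    simp only [one_mul, intervalIntegral.integral_neg, hsub]
    rw [show π * (1 / 2) / 2 = π / 4 by ring, cos_pi_div_four, log_div (by positivity) two_ne_zero,
      log_sqrt zero_le_two]
    ring
  · exact fun x _ => hasDerivAt_id x
  · intro x hx
    have h := ((hasDerivAt_cos _).comp x (hlin x)).log (hmem x hx) |>.neg
    refine h.congr_deriv ?_
    rw [tan_eq_sin_div_cos]
    simp only [Function.comp]
    ring
  · simp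
  · refine ContinuousOn.intervalIntegrable fun x hx => ?_
    exact (((continuousAt_tan.mpr (hmem x hx)).comp (f := fun x : ℝ => π * x / 2)
      (by fun_prop)).const_mul _).continuousWithinAt

theorem summable_one_fourth_pow_mul_one_div_sq :
    Summable fun p : ℕ × ℕ => 1 / (2 * (p.1 : ℝ) + 1) ^ 2 * (2 * (1 / 4 : ℝ) ^ (p.2 + 1)) := by
  refine Summable.mul_of_nonneg summable_one_div_two_mul_add_one_sq
    (g := fun k : ℕ => 2 * (1 / 4 : ℝ) ^ (k + 1)) ?_ (fun n => by positivity)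
    (fun k => by positivity)
  exact ((summable_nat_add_iff 1).mpr
    (summable_geometric_of_lt_one (by norm_num) (by norm_num))).mul_left 2

theorem norm_two_mul_div_pow_le {x : ℝ} (hx0 : 0 < x) (hx : x ≤ 1 / 2) (p : ℕ × ℕ) :
    ‖2 * (x ^ 2 / (2 * (p.1 : ℝ) + 1) ^ 2) ^ (p.2 + 1)‖
      ≤ 1 / (2 * (p.1 : ℝ) + 1) ^ 2 * (2 * (1 / 4 : ℝ) ^ (p.2 + 1)) := by
  rw [norm_of_nonneg (by positivity), div_pow]
  have hx2 : x ^ 2 ≤ 1 / 4 := by nlinarith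
  have hn : (1 : ℝ) ≤ (2 * (p.1 : ℝ) + 1) ^ 2 :=
    one_le_pow₀ (by linarith [p.1.cast_nonneg (α := ℝ)])
  have hpow : (2 * (p.1 : ℝ) + 1) ^ 2 ≤ ((2 * (p.1 : ℝ) + 1) ^ 2) ^ (p.2 + 1) :=
    le_self_pow₀ hn (Nat.succ_ne_zero _)
  calc 2 * ((x ^ 2) ^ (p.2 + 1) / ((2 * (p.1 : ℝ) + 1) ^ 2) ^ (p.2 + 1))
      ≤ 2 * ((1 / 4) ^ (p.2 + 1) / (2 * (p.1 : ℝ) + 1) ^ 2) := by gcongr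
    _ = _ := by ring

theorem hasSum_mul_pi_tan_prod {x : ℝ} (hx0 : 0 < x) (hx : x ≤ 1 / 2) :
    HasSum (fun p : ℕ × ℕ => 2 * (x ^ 2 / (2 * (p.1 : ℝ) + 1) ^ 2) ^ (p.2 + 1))
      (x * (π / 2 * tan (π * x / 2))) := by
  have hsum := (summable_one_fourth_pow_mul_one_div_sq.of_norm_bounded
    (norm_two_mul_div_pow_le hx0 hx)).hasSum
  have hfiber := hsum.prod_fiberwise
    (g := fun m : ℕ => x * (2 * x / ((2 * (m : ℝ) + 1) ^ 2 - x ^ 2))) fun m => by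
    have hn : (1 : ℝ) ≤ (2 * (m : ℝ) + 1) ^ 2 := one_le_pow₀ (by linarith [m.cast_nonneg (α := ℝ)])
    have hx2 : x ^ 2 < 1 := by nlinarith
    have hlt : x ^ 2 / (2 * (m : ℝ) + 1) ^ 2 < 1 := by
      rw [div_lt_one (by positivity)]
      linarith
    have hne : (2 * (m : ℝ) + 1) ^ 2 - x ^ 2 ≠ 0 := by linarith
    have h := (hasSum_geometric_of_lt_one (by positivity) hlt).mul_left
      (2 * (x ^ 2 / (2 * (m : ℝ) + 1) ^ 2))
    rw [show x * (2 * x / ((2 * (m : ℝ) + 1) ^ 2 - x ^ 2)) =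
      2 * (x ^ 2 / (2 * (m : ℝ) + 1) ^ 2) * (1 - x ^ 2 / (2 * (m : ℝ) + 1) ^ 2)⁻¹ by
        rw [one_sub_div (by positivity), inv_div]
        field_simp]
    refine h.congr_fun fun k => ?_
    ring
  rwa [← hfiber.unique ((hasSum_pi_mul_tan hx0 (by linarith)).mul_left x)]

theorem hasSum_integral_mul_pi_tan :
    HasSum (fun p : ℕ × ℕ => 1 / (2 * (p.1 : ℝ) + 1) ^ (2 * (p.2 + 1))
        / ((2 * ((p.2 : ℝ) + 1) + 1) * 2 ^ (2 * (p.2 + 1))))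
      (∫ x in (0 : ℝ)..(1 / 2), x * (π / 2 * tan (π * x / 2))) := by
  have huIoc : Set.uIoc (0 : ℝ) (1 / 2) = Set.Ioc 0 (1 / 2) := Set.uIoc_of_le (by norm_num)
  have h := intervalIntegral.hasSum_integral_of_dominated_convergence
    (μ := MeasureTheory.volume) (a := 0) (b := 1 / 2)
    (F := fun (p : ℕ × ℕ) (x : ℝ) => 2 * (x ^ 2 / (2 * (p.1 : ℝ) + 1) ^ 2) ^ (p.2 + 1))
    (f := fun x => x * (π / 2 * tan (π * x / 2)))
    (fun p _ => 1 / (2 * (p.1 : ℝ) + 1) ^ 2 * (2 * (1 / 4 : ℝ) ^ (p.2 + 1)))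
    (fun p => Continuous.aestronglyMeasurable (by fun_prop))
    (fun p => .of_forall fun x hx => by
      rw [huIoc] at hx
      exact norm_two_mul_div_pow_le hx.1 hx.2 p)
    (.of_forall fun _ _ => summable_one_fourth_pow_mul_one_div_sq)
    (by simp)
    (.of_forall fun x hx => by
      rw [huIoc] at hx
      exact hasSum_mul_pi_tan_prod hx.1 hx.2)
  refine h.congr_fun fun p => ?_
  simp only [div_pow, ← pow_mul]
  rw [intervalIntegral.integral_const_mul, intervalIntegral.integral_div, integral_pow]
  push_cast
  have hp : (2 * ((p.2 : ℝ) + 1) + 1) ≠ 0 := by positivity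
  rw [zero_pow (by omega), pow_succ (1 / 2 : ℝ), one_div_pow]
  field_simp
  ring

theorem lambda_series_one :
    ∑' k : ℕ, dirichletLambda (2 * (k + 1)) / ((2 * ((k : ℝ) + 1) + 1) * 2 ^ (2 * (k + 1)))
      = -(Real.log 2) / 4 + (∑' n : ℕ, (-1 : ℝ) ^ n / (2 * (n : ℝ) + 1) ^ 2) / π := by
  have h := (Equiv.prodComm ℕ ℕ).hasSum_iff.mpr hasSum_integral_mul_pi_tan
  have hfiber := h.summable.tsum_prod
  rw [h.tsum_eq, integral_mul_pi_tan, integral_log_cos_zero_pi_div_four] at hfiber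
  have hpi := pi_ne_zero
  calc _ = log 2 / 4 + 2 / π *
        ((∑' n : ℕ, (-1 : ℝ) ^ n / (2 * (n : ℝ) + 1) ^ 2) / 2 - π / 4 * log 2) := by
        rw [hfiber]
        refine tsum_congr fun k => ?_
        rw [dirichletLambda, ← tsum_div_const]
        rfl
    _ = _ := by
        field_simp
        ring
end

section
/- ζ_E(3) = (2π²/7)·(G/π + Σ_{k=1}^∞ λ(2k)/((2k+1)(2k+2)·2^{2k})), where ζ_E(3) = Σ_{n=1}^∞ (-1)^{n+1}/n³, G is Catalan's constant, and λ(s) = Σ_{m=0}^∞ 1/(2m+1)^s. -/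
open Real

open Filter Topology

lemma HasSum.congr_terms {f g : ℕ → ℝ} {a b : ℝ} (h : HasSum f a) (hfg : ∀ n, g n = f n)
    (hab : b = a) : HasSum g b := by
  rwa [funext hfg, hab]

/-- Mittag-Leffler expansion of the cotangent on `(0, 1)`. -/
lemma hasSum_cot_partialFractions {x : ℝ} (h0 : 0 < x) (h1 : x < 1) :
    HasSum (fun n : ℕ => 2 * x / (x ^ 2 - ((n : ℝ) + 1) ^ 2))
      (π * (cos (π * x) / sin (π * x)) - 1 / x) := by
  have hz : (x : ℂ) ∈ Complex.integerComplement := by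
    rintro ⟨n, hn⟩
    have hn' : (n : ℝ) = x := by exact_mod_cast hn
    rw [← hn'] at h0 h1
    have h2 : 0 < n := by exact_mod_cast h0
    have h3 : n < 1 := by exact_mod_cast h1
    omega
  have h := (summable_cotTerm hz).hasSum
  have hval : ∑' n, cotTerm (x : ℂ) n = π * Complex.cot (π * x) - 1 / x :=
    (cot_series_rep' hz).symm
  rw [hval] at h
  rw [← Complex.hasSum_ofReal]
  convert h using 1
  · funext n
    rw [cotTerm_identity hz]
    push_cast
    rw [mul_one_div]
    congr 1
    ring
  · push_cast
    rw [Complex.cot]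

/-- Mittag-Leffler expansion of the tangent on `(0, 1)`. -/
lemma hasSum_tan_partialFractions {x : ℝ} (h0 : 0 < x) (h1 : x < 1) :
    HasSum (fun m : ℕ => x ^ 2 / ((2 * (m : ℝ) + 1) ^ 2 - x ^ 2))
      (π * x / 4 * tan (π * x / 2)) := by
  have hx := hasSum_cot_partialFractions h0 h1
  have hhalf := (hasSum_cot_partialFractions (x := x / 2) (by linarith) (by linarith)).mul_left
    (1 / 2)
  have heven : Summable fun k : ℕ => 2 * x / (x ^ 2 - (((2 * k : ℕ) : ℝ) + 1) ^ 2) :=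
    hx.summable.comp_injective (i := fun k : ℕ => 2 * k) (fun a b h => by simpa using h)
  have hodd : HasSum (fun k : ℕ => 2 * x / (x ^ 2 - (((2 * k + 1 : ℕ) : ℝ) + 1) ^ 2))
      (1 / 2 * (π * (cos (π * (x / 2)) / sin (π * (x / 2))) - 1 / (x / 2))) := by
    refine hhalf.congr_terms (fun k => ?_) rfl
    have h2 : x ^ 2 - (((2 * k + 1 : ℕ) : ℝ) + 1) ^ 2
        = 4 * ((x / 2) ^ 2 - ((k : ℝ) + 1) ^ 2) := by push_cast; ring
    rw [h2, mul_div_mul_comm, mul_div_assoc]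
    ring
  have hsum := (HasSum.even_add_odd (f := fun n : ℕ => 2 * x / (x ^ 2 - ((n : ℝ) + 1) ^ 2))
    heven.hasSum hodd).unique hx
  have hpi := pi_pos
  have hu0 : 0 < π * x / 2 := by positivity
  have hu1 : π * x / 2 < π / 2 := by nlinarith
  have hs : sin (π * x / 2) ≠ 0 := (sin_pos_of_pos_of_lt_pi hu0 (by linarith)).ne'
  have hc : cos (π * x / 2) ≠ 0 := (cos_pos_of_mem_Ioo ⟨by linarith, hu1⟩).ne'
  have key := heven.hasSum.mul_left (-(x / 2))
  refine key.congr_terms (fun m => ?_) ?_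
  · rw [← neg_sub (x ^ 2), div_neg]
    push_cast
    ring
  · have hE := eq_sub_of_add_eq hsum
    rw [hE, tan_eq_sin_div_cos, show π * (x / 2) = π * x / 2 by ring,
      show π * x = 2 * (π * x / 2) by ring, sin_two_mul, cos_two_mul,
      show 2 * (π * x / 2) / 2 = π * x / 2 by ring]
    generalize hS : sin (π * x / 2) = S at *
    generalize hC : cos (π * x / 2) = C at *
    have hsc : S ^ 2 + C ^ 2 = 1 := by rw [← hS, ← hC]; exact sin_sq_add_cos_sq _
    have hS2 : S ^ 2 = 1 - C ^ 2 := by linarith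
    field_simp
    rw [hS2]
    ring

/-- Generating function of the Dirichlet lambda values at even integers. -/
lemma hasSum_dirichletLambda_mul_pow {x : ℝ} (h0 : 0 < x) (h1 : x < 1) :
    HasSum (fun k : ℕ => dirichletLambda (2 * (k + 1)) * x ^ (2 * (k + 1)))
      (π * x / 4 * tan (π * x / 2)) := by
  have hrow : ∀ m : ℕ, HasSum (fun k : ℕ => (x / (2 * (m : ℝ) + 1)) ^ (2 * (k + 1)))
      (x ^ 2 / ((2 * (m : ℝ) + 1) ^ 2 - x ^ 2)) := by
    intro m
    have hm : (1 : ℝ) ≤ 2 * (m : ℝ) + 1 := by linarith [Nat.cast_nonneg (α := ℝ) m]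
    have hm0 : (2 * (m : ℝ) + 1) ≠ 0 := by positivity
    have hq : (x / (2 * (m : ℝ) + 1)) ^ 2 < 1 := by
      rw [div_pow, div_lt_one (by positivity)]
      nlinarith
    have hne : (2 * (m : ℝ) + 1) ^ 2 - x ^ 2 ≠ 0 := by nlinarith
    refine ((hasSum_geometric_of_lt_one (sq_nonneg _) hq).mul_left
      ((x / (2 * (m : ℝ) + 1)) ^ 2)).congr_terms (fun k => by ring) ?_
    · have hden : 1 - (x / (2 * (m : ℝ) + 1)) ^ 2
          = ((2 * (m : ℝ) + 1) ^ 2 - x ^ 2) / (2 * (m : ℝ) + 1) ^ 2 := by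
        field_simp
      rw [hden]
      field_simp
  have htan := hasSum_tan_partialFractions h0 h1
  have hsummable : Summable fun p : ℕ × ℕ =>
      (x / (2 * (p.1 : ℝ) + 1)) ^ (2 * (p.2 + 1)) := by
    rw [summable_prod_of_nonneg (fun p => by positivity)]
    refine ⟨fun m => (hrow m).summable, ?_⟩
    simpa only [(hrow _).tsum_eq] using htan.summable
  have htotal := (hsummable.hasSum.prod_fiberwise hrow).unique htan
  have hswap := (Equiv.prodComm ℕ ℕ).hasSum_iff.mpr hsummable.hasSum
  rw [htotal] at hswap
  refine hswap.prod_fiberwise fun k => ?_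
  have hcol := (hsummable.comp_injective (i := fun m : ℕ => (m, k))
    (fun a b h => by simpa using h)).hasSum
  refine hcol.congr_terms (fun m => rfl) ?_
  rw [dirichletLambda, ← tsum_mul_right]
  refine tsum_congr fun m => ?_
  rw [Function.comp_apply, div_pow]
  ring

/-- The alternating conjugate Dirichlet kernel. -/
lemma sum_range_alternating_sin {θ : ℝ} (hθ : cos θ ≠ 0) (N : ℕ) :
    ∑ n ∈ Finset.range N, (-1 : ℝ) ^ n * (2 * sin (2 * ((n : ℝ) + 1) * θ))
      = tan θ - (-1) ^ N * (sin ((2 * (N : ℝ) + 1) * θ) / cos θ) := by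
  induction N with
  | zero => simp [tan_eq_sin_div_cos]
  | succ N ih =>
    rw [Finset.sum_range_succ, ih]
    have h1 : sin ((2 * (N : ℝ) + 1) * θ)
        = sin (2 * ((N : ℝ) + 1) * θ) * cos θ - cos (2 * ((N : ℝ) + 1) * θ) * sin θ := by
      rw [← sin_sub]
      ring_nf
    have h2 : sin ((2 * ((N + 1 : ℕ) : ℝ) + 1) * θ)
        = sin (2 * ((N : ℝ) + 1) * θ) * cos θ + cos (2 * ((N : ℝ) + 1) * θ) * sin θ := by
      rw [← sin_add]
      push_cast
      ring_nf
    rw [h1, h2, pow_succ]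
    field_simp
    ring

/-- Quantitative Riemann–Lebesgue lemma for functions vanishing at the endpoints. -/
lemma exists_abs_integral_mul_sin_le {h h' : ℝ → ℝ}
    (hd : ∀ t ∈ Set.Icc (0 : ℝ) 1, HasDerivAt h (h' t) t) (hc : ContinuousOn h' (Set.Icc 0 1))
    (h0 : h 0 = 0) (h1 : h 1 = 0) :
    ∃ C : ℝ, ∀ ω : ℝ, 0 < ω → |∫ t in (0 : ℝ)..1, h t * sin (ω * t)| ≤ C / ω := by
  obtain ⟨C, hC⟩ := isCompact_Icc.exists_bound_of_continuousOn hc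
  refine ⟨C, fun ω hω => ?_⟩
  have hu : Set.uIcc (0 : ℝ) 1 = Set.Icc 0 1 := Set.uIcc_of_le zero_le_one
  have hv : ∀ t ∈ Set.uIcc (0 : ℝ) 1,
      HasDerivAt (fun t => -cos (ω * t) / ω) (sin (ω * t)) t := by
    intro t _
    refine ((((hasDerivAt_id t).const_mul ω).cos.neg).div_const ω).congr_deriv ?_
    simp only [id]
    field_simp
  have hparts := intervalIntegral.integral_mul_deriv_eq_deriv_mul (u := h) (u' := h')
    (by rwa [hu]) hv (by rw [← hu] at hc; exact hc.intervalIntegrable)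
    (Continuous.intervalIntegrable (by fun_prop) _ _)
  rw [hparts, h0, h1]
  have hbound := intervalIntegral.norm_integral_le_of_norm_le_const (a := (0 : ℝ)) (b := 1)
    (f := fun t => h' t * (-cos (ω * t) / ω)) (C := C / ω) (fun t ht => by
      rw [Set.uIoc_of_le zero_le_one] at ht
      have hCt := hC t ⟨ht.1.le, ht.2⟩
      rw [norm_mul, norm_div, norm_neg, Real.norm_of_nonneg hω.le, ← mul_div_assoc]
      gcongr
      calc ‖h' t‖ * ‖cos (ω * t)‖ ≤ ‖h' t‖ * 1 := by
            gcongr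
            exact abs_cos_le_one _
        _ ≤ C := by rwa [mul_one])
  simpa using hbound

lemma integral_mul_one_sub_mul_sin {a : ℝ} (ha : a ≠ 0) :
    ∫ t in (0 : ℝ)..1, t * (1 - t) * sin (a * t)
      = -(sin a) / a ^ 2 + 2 * (1 - cos a) / a ^ 3 := by
  have hF : ∀ t ∈ Set.uIcc (0 : ℝ) 1, HasDerivAt
      (fun t => -(t * (1 - t)) * cos (a * t) / a + (1 - 2 * t) * sin (a * t) / a ^ 2
        - 2 * cos (a * t) / a ^ 3) (t * (1 - t) * sin (a * t)) t := by
    intro t _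
    have hat : HasDerivAt (fun t : ℝ => a * t) a t := by
      simpa using (hasDerivAt_id t).const_mul a
    have hg : HasDerivAt (fun t : ℝ => -(t * (1 - t))) (-(1 - 2 * t)) t := by
      refine ((hasDerivAt_id t).mul ((hasDerivAt_id t).const_sub 1)).neg.congr_deriv ?_
      simp only [id]
      ring
    have hg' : HasDerivAt (fun t : ℝ => 1 - 2 * t) (-2) t := by
      simpa using ((hasDerivAt_id t).const_mul 2).const_sub 1
    refine ((((hg.mul hat.cos).div_const a).add ((hg'.mul hat.sin).div_const (a ^ 2))).sub
      ((hat.cos.const_mul 2).div_const (a ^ 3))).congr_deriv ?_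
    field_simp
    ring
  rw [intervalIntegral.integral_eq_sub_of_hasDerivAt hF
    (Continuous.intervalIntegrable (by fun_prop) _ _)]
  simp
  field_simp
  ring

lemma cos_pi_div_four_mul_pos {t : ℝ} (ht : t ∈ Set.Icc (0 : ℝ) 1) : 0 < cos (π / 4 * t) := by
  have hpi := pi_pos
  have := ht.1
  have := ht.2
  exact cos_pos_of_mem_Ioo ⟨by nlinarith, by nlinarith⟩

lemma tendsto_sum_integral_mul_sin :
    Tendsto (fun N : ℕ => ∑ n ∈ Finset.range N, (-1 : ℝ) ^ n *
        (2 * ∫ t in (0 : ℝ)..1, t * (1 - t) * sin (π / 2 * ((n : ℝ) + 1) * t))) atTop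
      (𝓝 (∫ t in (0 : ℝ)..1, t * (1 - t) * tan (π / 4 * t))) := by
  have hu : Set.uIcc (0 : ℝ) 1 = Set.Icc 0 1 := Set.uIcc_of_le zero_le_one
  have hcos : ∀ t ∈ Set.Icc (0 : ℝ) 1, cos (π / 4 * t) ≠ 0 :=
    fun t ht => (cos_pi_div_four_mul_pos ht).ne'
  obtain ⟨C, hC⟩ := exists_abs_integral_mul_sin_le
    (h := fun t => t * (1 - t) / cos (π / 4 * t))
    (h' := fun t => ((1 - 2 * t) * cos (π / 4 * t) + t * (1 - t) * (sin (π / 4 * t) * (π / 4)))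
      / cos (π / 4 * t) ^ 2)
    (fun t ht => by
      have hat : HasDerivAt (fun t : ℝ => π / 4 * t) (π / 4) t := by
        simpa using (hasDerivAt_id t).const_mul (π / 4)
      have hg : HasDerivAt (fun t : ℝ => t * (1 - t)) (1 - 2 * t) t := by
        refine ((hasDerivAt_id t).mul ((hasDerivAt_id t).const_sub 1)).congr_deriv ?_
        simp only [id]
        ring
      refine (hg.div hat.cos (hcos t ht)).congr_deriv ?_
      ring)
    (ContinuousOn.div (by fun_prop) (by fun_prop) fun t ht => pow_ne_zero 2 (hcos t ht))
    (by simp) (by simp)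
  have hpart : ∀ N : ℕ, ∑ n ∈ Finset.range N, (-1 : ℝ) ^ n *
        (2 * ∫ t in (0 : ℝ)..1, t * (1 - t) * sin (π / 2 * ((n : ℝ) + 1) * t))
      = (∫ t in (0 : ℝ)..1, t * (1 - t) * tan (π / 4 * t))
        - (-1) ^ N * ∫ t in (0 : ℝ)..1,
          t * (1 - t) / cos (π / 4 * t) * sin ((2 * (N : ℝ) + 1) * (π / 4) * t) := by
    intro N
    have htan : IntervalIntegrable (fun t => t * (1 - t) * tan (π / 4 * t))
        MeasureTheory.volume 0 1 := by
      refine ContinuousOn.intervalIntegrable ?_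
      rw [hu]
      simp only [tan_eq_sin_div_cos]
      exact ContinuousOn.mul (by fun_prop) (ContinuousOn.div (by fun_prop) (by fun_prop) hcos)
    have hker : IntervalIntegrable (fun t => (-1) ^ N * (t * (1 - t) / cos (π / 4 * t)
        * sin ((2 * (N : ℝ) + 1) * (π / 4) * t))) MeasureTheory.volume 0 1 := by
      refine ContinuousOn.intervalIntegrable ?_
      rw [hu]
      exact continuousOn_const.mul
        (ContinuousOn.mul (ContinuousOn.div (by fun_prop) (by fun_prop) hcos) (by fun_prop))
    rw [← intervalIntegral.integral_const_mul, ← intervalIntegral.integral_sub htan hker]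
    simp only [← intervalIntegral.integral_const_mul]
    rw [← intervalIntegral.integral_finsetSum
      (fun n _ => Continuous.intervalIntegrable (by fun_prop) _ _)]
    refine intervalIntegral.integral_congr fun t ht => ?_
    rw [hu] at ht
    have hk := sum_range_alternating_sin (hcos t ht) N
    calc ∑ n ∈ Finset.range N, (-1 : ℝ) ^ n *
          (2 * (t * (1 - t) * sin (π / 2 * ((n : ℝ) + 1) * t)))
        = t * (1 - t) * ∑ n ∈ Finset.range N,
            (-1 : ℝ) ^ n * (2 * sin (2 * ((n : ℝ) + 1) * (π / 4 * t))) := by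
          rw [Finset.mul_sum]
          refine Finset.sum_congr rfl fun n _ => ?_
          rw [show π / 2 * ((n : ℝ) + 1) * t = 2 * ((n : ℝ) + 1) * (π / 4 * t) by ring]
          ring
      _ = _ := by
          rw [hk]
          ring_nf
  have hlin : Tendsto (fun N : ℕ => (2 * (N : ℝ) + 1) * (π / 4)) atTop atTop := by
    refine Tendsto.atTop_mul_const (by positivity) ?_
    exact tendsto_atTop_add_const_right _ _
      (tendsto_natCast_atTop_atTop.const_mul_atTop two_pos)
  have hzero : Tendsto (fun N : ℕ => (-1 : ℝ) ^ N * ∫ t in (0 : ℝ)..1,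
      t * (1 - t) / cos (π / 4 * t) * sin ((2 * (N : ℝ) + 1) * (π / 4) * t)) atTop (𝓝 0) := by
    refine squeeze_zero_norm (fun N => ?_) (hlin.const_div_atTop C)
    rw [norm_mul, norm_pow, norm_neg, norm_one, one_pow, one_mul]
    exact hC _ (by positivity)
  simp only [hpart]
  simpa using hzero.const_sub (∫ t in (0 : ℝ)..1, t * (1 - t) * tan (π / 4 * t))

lemma cos_sin_odd_mul_pi_div_two (k : ℕ) :
    cos (π / 2 * (2 * (k : ℝ) + 1)) = 0 ∧ sin (π / 2 * (2 * (k : ℝ) + 1)) = (-1) ^ k := by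
  rw [show π / 2 * (2 * (k : ℝ) + 1) = π / 2 + k * π by ring]
  constructor
  · rw [cos_add_nat_mul_pi]; simp
  · rw [sin_add_nat_mul_pi]; simp

lemma summable_alternating_cubes :
    Summable fun n : ℕ => (-1 : ℝ) ^ n / ((n : ℝ) + 1) ^ 3 := by
  refine Summable.of_norm ?_
  have h := (summable_nat_add_iff 1).mpr (Real.summable_one_div_nat_pow.mpr (by norm_num : 1 < 3))
  refine h.congr fun n => ?_
  rw [norm_div, norm_pow, norm_neg, norm_one, one_pow, Real.norm_of_nonneg (by positivity)]
  push_cast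
  rfl

lemma summable_alternating_odd_squares :
    Summable fun n : ℕ => (-1 : ℝ) ^ n / (2 * (n : ℝ) + 1) ^ 2 := by
  refine Summable.of_norm ?_
  have h := (Real.summable_one_div_nat_pow.mpr (by norm_num : 1 < 2)).comp_injective
    (i := fun n : ℕ => 2 * n + 1) (fun a b h => by simpa using h)
  refine h.congr fun n => ?_
  rw [norm_div, norm_pow, norm_neg, norm_one, one_pow, Real.norm_of_nonneg (by positivity)]
  simp

lemma alternating_integral_mul_sin_even (k : ℕ) :
    (-1 : ℝ) ^ (2 * k) * (2 * ∫ t in (0 : ℝ)..1,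
        t * (1 - t) * sin (π / 2 * (((2 * k : ℕ) : ℝ) + 1) * t))
      = -8 / π ^ 2 * ((-1) ^ k / (2 * (k : ℝ) + 1) ^ 2)
        + 32 / π ^ 3 * ((-1) ^ (2 * k) / (((2 * k : ℕ) : ℝ) + 1) ^ 3) := by
  have hk : (2 * (k : ℝ) + 1) ≠ 0 := by positivity
  have hpi := pi_ne_zero
  rw [integral_mul_one_sub_mul_sin (by positivity), pow_mul]
  push_cast
  rw [(cos_sin_odd_mul_pi_div_two k).1, (cos_sin_odd_mul_pi_div_two k).2, neg_one_sq, one_pow]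
  field_simp
  ring

lemma alternating_integral_mul_sin_odd (k : ℕ) :
    (-1 : ℝ) ^ (2 * k + 1) * (2 * ∫ t in (0 : ℝ)..1,
        t * (1 - t) * sin (π / 2 * (((2 * k + 1 : ℕ) : ℝ) + 1) * t))
      = 32 / π ^ 3 * ((-1) ^ (2 * k + 1) / (((2 * k + 1 : ℕ) : ℝ) + 1) ^ 3)
        - 4 / π ^ 3 * ((-1) ^ k / ((k : ℝ) + 1) ^ 3) := by
  have hk : ((k : ℝ) + 1) ≠ 0 := by positivity
  have hpi := pi_ne_zero
  rw [integral_mul_one_sub_mul_sin (by positivity),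
    show π / 2 * (((2 * k + 1 : ℕ) : ℝ) + 1) = ((k + 1 : ℕ) : ℝ) * π by push_cast; ring,
    sin_nat_mul_pi, cos_nat_mul_pi, pow_succ (-1 : ℝ) (2 * k), pow_mul, neg_one_sq, one_pow,
    show ((2 * k + 1 : ℕ) : ℝ) + 1 = 2 * (k + 1) by push_cast; ring, pow_succ (-1 : ℝ) k]
  push_cast
  field_simp
  ring

lemma integral_mul_one_sub_mul_tan :
    ∫ t in (0 : ℝ)..1, t * (1 - t) * tan (π / 4 * t)
      = 28 / π ^ 3 * (∑' n : ℕ, (-1 : ℝ) ^ n / ((n : ℝ) + 1) ^ 3)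
        - 8 / π ^ 2 * ∑' n : ℕ, (-1 : ℝ) ^ n / (2 * (n : ℝ) + 1) ^ 2 := by
  have hη := summable_alternating_cubes
  have hG := summable_alternating_odd_squares
  have hO := (hη.comp_injective (i := fun k : ℕ => 2 * k) (fun a b h => by simpa using h)).hasSum
  have hE := (hη.comp_injective (i := fun k : ℕ => 2 * k + 1)
    (fun a b h => by simpa using h)).hasSum
  have hOE := (HasSum.even_add_odd (f := fun n : ℕ => (-1 : ℝ) ^ n / ((n : ℝ) + 1) ^ 3)
    hO hE).unique hη.hasSum
  have heven := ((hG.hasSum.mul_left (-8 / π ^ 2)).add (hO.mul_left (32 / π ^ 3))).congr_terms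
    alternating_integral_mul_sin_even rfl
  have hodd := ((hE.mul_left (32 / π ^ 3)).sub (hη.hasSum.mul_left (4 / π ^ 3))).congr_terms
    alternating_integral_mul_sin_odd rfl
  have hsum := HasSum.even_add_odd (f := fun n : ℕ => (-1 : ℝ) ^ n *
    (2 * ∫ t in (0 : ℝ)..1, t * (1 - t) * sin (π / 2 * ((n : ℝ) + 1) * t))) heven hodd
  rw [tendsto_nhds_unique tendsto_sum_integral_mul_sin hsum.tendsto_sum_nat, ← hOE]
  ring

lemma dirichletLambda_even_nonneg_le (k : ℕ) :
    0 ≤ dirichletLambda (2 * (k + 1)) ∧ dirichletLambda (2 * (k + 1)) ≤ dirichletLambda 2 := by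
  have hs : ∀ j : ℕ, Summable fun m : ℕ => 1 / (2 * (m : ℝ) + 1) ^ (2 * (j + 1)) := fun j => by
    have h := (Real.summable_one_div_nat_pow.mpr (by omega : 1 < 2 * (j + 1))).comp_injective
      (i := fun n : ℕ => 2 * n + 1) (fun a b h => by simpa using h)
    refine h.congr fun n => ?_
    simp
  refine ⟨tsum_nonneg fun m => by positivity, ?_⟩
  refine (hs k).tsum_le_tsum (fun m => ?_) (hs 0)
  have hm : (1 : ℝ) ≤ 2 * (m : ℝ) + 1 := by linarith [Nat.cast_nonneg (α := ℝ) m]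
  gcongr 1 / ?_
  exact pow_le_pow_right₀ hm (by omega)

lemma hasSum_dirichletLambda_even_div :
    HasSum (fun k : ℕ => dirichletLambda (2 * (k + 1))
      / ((2 * ((k : ℝ) + 1) + 1) * (2 * ((k : ℝ) + 1) + 2) * 2 ^ (2 * (k + 1))))
      (π / 8 * ∫ t in (0 : ℝ)..1, t * (1 - t) * tan (π / 4 * t)) := by
  have hgeom : Summable fun k : ℕ => dirichletLambda 2 * (1 / 4 : ℝ) ^ (k + 1) :=
    ((summable_nat_add_iff 1).mpr
      (summable_geometric_of_lt_one (by norm_num) (by norm_num))).mul_left _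
  have h := intervalIntegral.hasSum_integral_of_dominated_convergence
    (μ := MeasureTheory.volume) (a := 0) (b := 1)
    (F := fun k t => dirichletLambda (2 * (k + 1)) * (t / 2) ^ (2 * (k + 1)) * (1 - t))
    (f := fun t => π / 8 * (t * (1 - t) * tan (π / 4 * t)))
    (fun k _ => dirichletLambda 2 * (1 / 4 : ℝ) ^ (k + 1))
    (fun k => Continuous.aestronglyMeasurable (by fun_prop))
    (fun k => Eventually.of_forall fun t ht => by
      rw [Set.uIoc_of_le zero_le_one] at ht
      obtain ⟨hl0, hl⟩ := dirichletLambda_even_nonneg_le k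
      have ht0 := ht.1
      have ht1 : 0 ≤ 1 - t := sub_nonneg.mpr ht.2
      have hp : (t / 2) ^ (2 * (k + 1)) ≤ (1 / 4 : ℝ) ^ (k + 1) := by
        rw [pow_mul]
        gcongr
        nlinarith [ht.2]
      rw [Real.norm_of_nonneg (by positivity)]
      calc _ ≤ dirichletLambda (2 * (k + 1)) * (t / 2) ^ (2 * (k + 1)) * 1 := by
            gcongr
            linarith
        _ ≤ _ := by
            rw [mul_one]
            gcongr
            exact hl0.trans hl)
    (Eventually.of_forall fun _ _ => hgeom) intervalIntegrable_const
    (Eventually.of_forall fun t ht => by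
      rw [Set.uIoc_of_le zero_le_one] at ht
      have hx := hasSum_dirichletLambda_mul_pow (x := t / 2) (by linarith [ht.1])
        (by linarith [ht.2])
      refine (hx.mul_right (1 - t)).congr_terms (fun k => rfl) ?_
      rw [show π * (t / 2) / 2 = π / 4 * t by ring]
      ring)
  refine h.congr_terms (fun k => ?_) (intervalIntegral.integral_const_mul _ _).symm
  have hmono : ∀ t : ℝ, dirichletLambda (2 * (k + 1)) * (t / 2) ^ (2 * (k + 1)) * (1 - t)
      = dirichletLambda (2 * (k + 1)) / 2 ^ (2 * (k + 1))
        * (t ^ (2 * (k + 1)) - t ^ (2 * (k + 1) + 1)) := fun t => by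
    rw [div_pow]
    ring
  simp only [hmono]
  rw [intervalIntegral.integral_const_mul, intervalIntegral.integral_sub
    (Continuous.intervalIntegrable (by fun_prop) _ _)
    (Continuous.intervalIntegrable (by fun_prop) _ _), integral_pow, integral_pow]
  push_cast
  have h1 : (2 * ((k : ℝ) + 1) + 1) ≠ 0 := by positivity
  have h2 : (2 * ((k : ℝ) + 1) + 2) ≠ 0 := by positivity
  have h3 : (2 * ((k : ℝ) + 1) + 1 + 1) ≠ 0 := by positivity
  simp only [one_pow, zero_pow (Nat.succ_ne_zero _), sub_zero]
  field_simp
  ring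

theorem zetaE_three_series :
    ∑' n : ℕ, (-1 : ℝ) ^ (n + 1 + 1) / ((n : ℝ) + 1) ^ 3
      = (2 * π ^ 2 / 7) * ((∑' n : ℕ, (-1 : ℝ) ^ n / (2 * (n : ℝ) + 1) ^ 2) / π
        + ∑' k : ℕ, dirichletLambda (2 * (k + 1))
            / ((2 * ((k : ℝ) + 1) + 1) * (2 * ((k : ℝ) + 1) + 2) * 2 ^ (2 * (k + 1)))) := by
  have hsign : ∀ n : ℕ, (-1 : ℝ) ^ (n + 1 + 1) = (-1) ^ n := fun n => by ring
  simp only [hsign]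
  rw [hasSum_dirichletLambda_even_div.tsum_eq, integral_mul_one_sub_mul_tan]
  have hpi := pi_ne_zero
  field_simp
  ring
end
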